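/- arXiv:2003.07949 — 4 statements merged into one kernel-verified Lean document; each statement's English description precedes it below -/
import Mathlib

section
/- Let N ≥ ν, where ν is the observability index, and let S be any matrix with orthonormal columns whose column space equals the column space of the observability matrix O_N. Then there exists a matrix M ∈ ℝ^{q×q} (q = Rank(O_N)) such that (i) M(S^⊤ O_N x) = S^⊤ O_N A x for every x in the orthogonal complement of Ker(O_N), and (ii) for every initial state x0 ∈ ℝ^n, the nominal feature vector sequence w(k) = S^⊤ O_N A^k x0 satisfies w(k+1) = M w(k) for all k ∈ ℕ. -/
open Matrix

noncomputable section

/-- The observability matrix `O_N = [C; CA; …; CA^{N-1}]`, with block rows indexed by `Fin N`. -/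
def obsMat {n p : ℕ} (A : Matrix (Fin n) (Fin n) ℝ) (C : Matrix (Fin p) (Fin n) ℝ)
    (N : ℕ) : Matrix (Fin N × Fin p) (Fin n) ℝ :=
  fun ir j => (C * A ^ (ir.1 : ℕ)) ir.2 j

/-- The observability index `ν = min {N : Rank O_N = Rank O_{N+j} for all j}`. -/
def obsIndex {n p : ℕ} (A : Matrix (Fin n) (Fin n) ℝ) (C : Matrix (Fin p) (Fin n) ℝ) : ℕ :=
  sInf {N : ℕ | ∀ j : ℕ, (obsMat A C (N + j)).rank = (obsMat A C N).rank}

/-- The Krylov/excitability matrix `E_N(x) = [x, Ax, …, A^{N-1} x]`. -/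
def excMat {n : ℕ} (A : Matrix (Fin n) (Fin n) ℝ) (x : Fin n → ℝ) (N : ℕ) :
    Matrix (Fin n) (Fin N) ℝ :=
  fun i k => (A ^ (k : ℕ)).mulVec x i

/-- The excitability index at `x`: `μ(x) = min {i : Rank E_i(x) = Rank E_{i+j}(x) for all j}`. -/
def excIndexAt {n : ℕ} (A : Matrix (Fin n) (Fin n) ℝ) (x : Fin n → ℝ) : ℕ :=
  sInf {i : ℕ | ∀ j : ℕ, (excMat A x (i + j)).rank = (excMat A x i).rank}

/-- The excitability index `μ = max_{x ∈ ℝⁿ} μ(x)`. -/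
def excIndex {n : ℕ} (A : Matrix (Fin n) (Fin n) ℝ) : ℕ :=
  sSup (Set.range (excIndexAt A))

/-- The Hankel matrix `Y_{N,T}` of the nominal output `y(k) = C A^k x0`; its `j`-th column is
the stacked vector `(y(j), …, y(j+N-1))`. -/
def hankelMat {n p : ℕ} (A : Matrix (Fin n) (Fin n) ℝ) (C : Matrix (Fin p) (Fin n) ℝ)
    (x0 : Fin n → ℝ) (N T : ℕ) : Matrix (Fin N × Fin p) (Fin (T - N + 1)) ℝ :=
  fun ir j => (C * A ^ ((j : ℕ) + (ir.1 : ℕ))).mulVec x0 ir.2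

/-- The Hankel information `Γ({y(k)}) = sup {Rank Y_{N,T} : N ≤ T}`. -/
def hankelInfo {n p : ℕ} (A : Matrix (Fin n) (Fin n) ℝ) (C : Matrix (Fin p) (Fin n) ℝ)
    (x0 : Fin n → ℝ) : ℕ :=
  sSup {r : ℕ | ∃ N T : ℕ, N ≤ T ∧ r = (hankelMat A C x0 N T).rank}

/-!
The kernel of `O_N` shrinks as `N` grows, and once the rank has stabilized so has the kernel.
Since `A` maps `ker O_{N+1}` into `ker O_N`, this makes `ker O_N` invariant under `A` for `N ≥ ν`.
As the range of `S` contains that of `O_N`, no nonzero vector `O_N x` is orthogonal to the columns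
of `S`, so `ker (Sᵀ O_N) = ker O_N` and `Sᵀ O_N A` factors through `Sᵀ O_N`.
-/

section LinearAlgebra

variable {m m' n q : Type*} [Fintype n]

lemma rank_eq_rank_iff_ker_eq_of_ker_le {K : Type*} [Field K]
    {F : Matrix m n K} {G : Matrix m' n K}
    (hker : LinearMap.ker F.mulVecLin ≤ LinearMap.ker G.mulVecLin) :
    F.rank = G.rank ↔ LinearMap.ker F.mulVecLin = LinearMap.ker G.mulVecLin := by
  have nullity_F := LinearMap.finrank_range_add_finrank_ker F.mulVecLin
  have nullity_G := LinearMap.finrank_range_add_finrank_ker G.mulVecLin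
  rw [← Matrix.rank] at nullity_F nullity_G
  constructor
  · exact fun hrank => Submodule.eq_of_le_of_finrank_eq hker (by omega)
  · intro hker_eq
    rw [hker_eq] at nullity_F
    omega

lemma exists_mul_eq_of_ker_le {K : Type*} [Field K] [Fintype m]
    {F : Matrix m n K} {G : Matrix m' n K}
    (hker : LinearMap.ker F.mulVecLin ≤ LinearMap.ker G.mulVecLin) :
    ∃ M : Matrix m' m K, M * F = G := by
  classical
  obtain ⟨g, hg⟩ := LinearMap.exists_extend
    ((LinearMap.ker F.mulVecLin).liftQ G.mulVecLin hker ∘ₗ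
      F.mulVecLin.quotKerEquivRange.symm.toLinearMap)
  have g_apply (x : n → K) : g (F *ᵥ x) = G *ᵥ x := by
    have hx : F *ᵥ x ∈ LinearMap.range F.mulVecLin := ⟨x, rfl⟩
    calc g (F *ᵥ x) = (LinearMap.ker F.mulVecLin).liftQ G.mulVecLin hker
          (F.mulVecLin.quotKerEquivRange.symm ⟨F *ᵥ x, hx⟩) := LinearMap.congr_fun hg ⟨F *ᵥ x, hx⟩
      _ = G *ᵥ x := congrArg _ (F.mulVecLin.quotKerEquivRange_symm_apply_image x hx)
  refine ⟨LinearMap.toMatrix' g, mulVec_injective (funext fun x => ?_)⟩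
  rw [← mulVec_mulVec, LinearMap.toMatrix'_mulVec, g_apply]

lemma ker_transpose_mul_of_range_le {R : Type*} [CommRing R] [LinearOrder R]
    [IsStrictOrderedRing R] [Fintype m] [Fintype q] {S : Matrix m q R} {F : Matrix m n R}
    (hrange : LinearMap.range F.mulVecLin ≤ LinearMap.range S.mulVecLin) :
    LinearMap.ker (Sᵀ * F).mulVecLin = LinearMap.ker F.mulVecLin := by
  rw [mulVecLin_mul]
  refine le_antisymm (fun x hx => ?_) (LinearMap.ker_le_ker_comp _ _)
  obtain ⟨z, hz : S *ᵥ z = F *ᵥ x⟩ := hrange ⟨x, rfl⟩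
  have orthogonal : Sᵀ *ᵥ (F *ᵥ x) = 0 := hx
  refine dotProduct_self_eq_zero.mp (?_ : F *ᵥ x ⬝ᵥ F *ᵥ x = 0)
  calc F *ᵥ x ⬝ᵥ F *ᵥ x = F *ᵥ x ⬝ᵥ S *ᵥ z := by rw [hz]
    _ = z ⬝ᵥ Sᵀ *ᵥ (F *ᵥ x) := (dotProduct_transpose_mulVec ..).symm
    _ = 0 := by rw [orthogonal, dotProduct_zero]

end LinearAlgebra

section Observability

variable {n p : ℕ} (A : Matrix (Fin n) (Fin n) ℝ) (C : Matrix (Fin p) (Fin n) ℝ)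

lemma mem_ker_obsMat_iff (N : ℕ) (v : Fin n → ℝ) :
    v ∈ LinearMap.ker (obsMat A C N).mulVecLin ↔ ∀ i < N, (C * A ^ i) *ᵥ v = 0 := by
  constructor
  · exact fun hv i hi => funext fun r => congrFun hv (⟨i, hi⟩, r)
  · exact fun hv => funext fun (i, r) => congrFun (hv i i.2) r

lemma antitone_ker_obsMat : Antitone fun N => LinearMap.ker (obsMat A C N).mulVecLin := by
  intro N N' hNN' v hv
  rw [mem_ker_obsMat_iff] at hv ⊢
  exact fun i hi => hv i (hi.trans_le hNN')

lemma ker_obsMat_succ_le_comap (N : ℕ) :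
    LinearMap.ker (obsMat A C (N + 1)).mulVecLin ≤
      (LinearMap.ker (obsMat A C N).mulVecLin).comap A.mulVecLin := by
  intro v hv
  rw [mem_ker_obsMat_iff] at hv
  rw [Submodule.mem_comap, mem_ker_obsMat_iff]
  intro i hi
  rw [mulVecLin_apply, mulVec_mulVec, Matrix.mul_assoc, ← pow_succ]
  exact hv (i + 1) (Nat.succ_lt_succ hi)

lemma exists_rank_obsMat_add_eq :
    ∃ N, ∀ j, (obsMat A C (N + j)).rank = (obsMat A C N).rank := by
  obtain ⟨N, hN⟩ := IsArtinian.monotone_stabilizes ⟨_, (antitone_ker_obsMat A C).dual_right⟩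
  refine ⟨N, fun j => ?_⟩
  have hle : N ≤ N + j := Nat.le_add_right N j
  exact (rank_eq_rank_iff_ker_eq_of_ker_le (antitone_ker_obsMat A C hle)).mpr (hN _ hle).symm

variable {A C}

lemma rank_obsMat_eq_of_obsIndex_le {N : ℕ} (hN : obsIndex A C ≤ N) :
    (obsMat A C N).rank = (obsMat A C (obsIndex A C)).rank := by
  have stable : ∀ j, (obsMat A C (obsIndex A C + j)).rank = (obsMat A C (obsIndex A C)).rank :=
    Nat.sInf_mem (exists_rank_obsMat_add_eq A C)
  rw [← stable (N - obsIndex A C), Nat.add_sub_cancel' hN]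

lemma ker_obsMat_succ_of_obsIndex_le {N : ℕ} (hN : obsIndex A C ≤ N) :
    LinearMap.ker (obsMat A C (N + 1)).mulVecLin = LinearMap.ker (obsMat A C N).mulVecLin := by
  refine (rank_eq_rank_iff_ker_eq_of_ker_le (antitone_ker_obsMat A C N.le_succ)).mp ?_
  rw [rank_obsMat_eq_of_obsIndex_le hN, rank_obsMat_eq_of_obsIndex_le (Nat.le_succ_of_le hN)]

lemma ker_obsMat_le_comap_of_obsIndex_le {N : ℕ} (hN : obsIndex A C ≤ N) :
    LinearMap.ker (obsMat A C N).mulVecLin ≤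
      (LinearMap.ker (obsMat A C N).mulVecLin).comap A.mulVecLin :=
  (ker_obsMat_succ_of_obsIndex_le hN).ge.trans (ker_obsMat_succ_le_comap A C N)

end Observability

theorem feature_space_dynamics_general {n p : ℕ} {q : Type*} [Fintype q]
    (A : Matrix (Fin n) (Fin n) ℝ) (C : Matrix (Fin p) (Fin n) ℝ) (N : ℕ)
    (hN : obsIndex A C ≤ N) (S : Matrix (Fin N × Fin p) q ℝ)
    (hcol : LinearMap.range (obsMat A C N).mulVecLin ≤ LinearMap.range S.mulVecLin) :
    ∃ M : Matrix q q ℝ, M * (Sᵀ * obsMat A C N) = Sᵀ * obsMat A C N * A := by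
  refine exists_mul_eq_of_ker_le ?_
  rw [mulVecLin_mul (Sᵀ * _), LinearMap.ker_comp, ker_transpose_mul_of_range_le hcol]
  exact ker_obsMat_le_comap_of_obsIndex_le hN

/-- **Feature space dynamics (model-based).** For `N ≥ ν` and any matrix `S` with orthonormal
columns with `Col S = Col O_N` (`q = Rank O_N`), there is a matrix `M` such that
`M (Sᵀ O_N x) = Sᵀ O_N A x` for every `x ⊥ Ker O_N`, and the nominal feature vector sequence
`w(k) = Sᵀ O_N A^k x0` satisfies `w(k+1) = M w(k)` for every initial state `x0` and all `k`. -/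
theorem feature_space_dynamics {n p q : ℕ}
    (A : Matrix (Fin n) (Fin n) ℝ) (C : Matrix (Fin p) (Fin n) ℝ) (N : ℕ)
    (hN : obsIndex A C ≤ N)
    (hq : q = (obsMat A C N).rank)
    (S : Matrix (Fin N × Fin p) (Fin q) ℝ)
    (hortho : Sᵀ * S = 1)
    (hcol : LinearMap.range S.mulVecLin = LinearMap.range (obsMat A C N).mulVecLin) :
    ∃ M : Matrix (Fin q) (Fin q) ℝ,
      (∀ x : Fin n → ℝ,
        (∀ y : Fin n → ℝ, (obsMat A C N).mulVec y = 0 → x ⬝ᵥ y = 0) →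
        M.mulVec ((Sᵀ * obsMat A C N).mulVec x) = (Sᵀ * obsMat A C N).mulVec (A.mulVec x)) ∧
      (∀ x0 : Fin n → ℝ, ∀ k : ℕ,
        (Sᵀ * obsMat A C N).mulVec ((A ^ (k + 1)).mulVec x0) =
          M.mulVec ((Sᵀ * obsMat A C N).mulVec ((A ^ k).mulVec x0))) := by
  obtain ⟨M, hM⟩ := feature_space_dynamics_general A C N hN S hcol.ge
  have feature_step (x : Fin n → ℝ) : M *ᵥ ((Sᵀ * obsMat A C N) *ᵥ x) =
      (Sᵀ * obsMat A C N) *ᵥ (A *ᵥ x) := by simp only [mulVec_mulVec, hM]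
  exact ⟨M, fun x _ => feature_step x,
    fun x₀ k => by rw [feature_step, mulVec_mulVec x₀ A, ← pow_succ']⟩
end
end

section
/- Let y(k) = C A^k x0 be the nominal output from initial state x0, and let N ≤ T. If V ⊆ ℝ^n is any subspace such that x0 ∈ V, A V ⊆ V, and V is contained in the orthogonal complement of Ker(O_N), then Rank(Y_{N,T}) ≤ dim(V). -/
open Matrix

noncomputable section

/-!
The Hankel matrix factors as `Y_{N,T} = O_N * [x0, A x0, …, A^{T-N} x0]`, so its rank is at most
that of the Krylov factor, whose columns all lie in `V`.
-/

/-- The block Hankel matrix of a vector signal `y`, with `N` block rows and `M` columns: column `j`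
is the stacked window `(y j, …, y (j + N - 1))`, so that `Y_{N,T}` is the case `M = T - N + 1`. -/
def blockHankel {p α : Type*} (y : ℕ → p → α) (N M : ℕ) : Matrix (Fin N × p) (Fin M) α :=
  Matrix.of fun ir j => y (j + ir.1) ir.2

section

variable {R m n p : Type*} [CommSemiring R] [Fintype n]

theorem rank_le_finrank_of_forall_col_mem [StrongRankCondition R] (B : Matrix m n R)
    (V : Submodule R (m → R)) [Module.Finite R V] (hB : ∀ j, B.col j ∈ V) :
    B.rank ≤ Module.finrank R V := by
  rw [Matrix.rank_eq_finrank_span_cols]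
  exact Submodule.finrank_mono (Submodule.span_le.2 (Set.range_subset_iff.2 hB))

variable [DecidableEq n]

/-- The observability matrix `[C; CA; …; CA^{N-1}]` over a commutative semiring, the left factor of
the Hankel matrix of a linear system. It restricts to `obsMat` over `ℝ`. -/
def observabilityMatrix (A : Matrix n n R) (C : Matrix p n R) (N : ℕ) :
    Matrix (Fin N × p) n R :=
  Matrix.of fun ir => (C * A ^ (ir.1 : ℕ)) ir.2

/-- The Krylov matrix `[x, Ax, …, A^{M-1} x]` over a commutative semiring, the right factor of the
Hankel matrix of a linear system. It restricts to `excMat` over `ℝ`. -/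
def krylovMatrix (A : Matrix n n R) (x : n → R) (M : ℕ) : Matrix n (Fin M) R :=
  Matrix.of fun i k => (A ^ (k : ℕ) *ᵥ x) i

theorem blockHankel_output_eq_mul (A : Matrix n n R) (C : Matrix p n R) (x : n → R) (N M : ℕ) :
    blockHankel (fun k => (C * A ^ k) *ᵥ x) N M =
      observabilityMatrix A C N * krylovMatrix A x M := by
  ext ⟨i, r⟩ j
  calc ((C * A ^ (j + i : ℕ)) *ᵥ x) r
      = ((C * A ^ (i : ℕ)) *ᵥ (A ^ (j : ℕ) *ᵥ x)) r := by
        rw [Matrix.mulVec_mulVec, Matrix.mul_assoc, ← pow_add, add_comm (i : ℕ)]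
    _ = (observabilityMatrix A C N * krylovMatrix A x M) (i, r) j := rfl

theorem pow_mulVec_mem {A : Matrix n n R} {V : Submodule R (n → R)}
    (hAV : ∀ v ∈ V, A *ᵥ v ∈ V) {x : n → R} (hx : x ∈ V) (k : ℕ) : A ^ k *ᵥ x ∈ V := by
  rw [← Matrix.toLin'_apply, Matrix.toLin'_pow]
  exact Module.End.pow_apply_mem_of_forall_mem k hAV x hx

theorem hankel_rank_le_dim_invariant_general [StrongRankCondition R]
    (A : Matrix n n R) (C : Matrix p n R) (x0 : n → R) (N M : ℕ)
    (V : Submodule R (n → R)) [Module.Finite R V]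
    (hx0 : x0 ∈ V) (hAV : ∀ v ∈ V, A *ᵥ v ∈ V) :
    (blockHankel (fun k => (C * A ^ k) *ᵥ x0) N M).rank ≤ Module.finrank R V :=
  calc (blockHankel (fun k => (C * A ^ k) *ᵥ x0) N M).rank
      = (observabilityMatrix A C N * krylovMatrix A x0 M).rank := by
        rw [blockHankel_output_eq_mul]
    _ ≤ (krylovMatrix A x0 M).rank := Matrix.rank_mul_le_right _ _
    _ ≤ Module.finrank R V :=
        rank_le_finrank_of_forall_col_mem _ V fun k => pow_mulVec_mem hAV hx0 k

end

/-- If `V` is an `A`-invariant subspace contained in the orthogonal complement of `Ker O_N`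
with `x0 ∈ V`, then `Rank Y_{N,T} ≤ dim V`. -/
theorem hankel_rank_le_dim_invariant {n p : ℕ}
    (A : Matrix (Fin n) (Fin n) ℝ) (C : Matrix (Fin p) (Fin n) ℝ) (x0 : Fin n → ℝ)
    (N T : ℕ) (hNT : N ≤ T)
    (V : Submodule ℝ (Fin n → ℝ))
    (hx0 : x0 ∈ V)
    (hAV : ∀ v ∈ V, A.mulVec v ∈ V)
    (hVperp : ∀ v ∈ V, ∀ y : Fin n → ℝ, (obsMat A C N).mulVec y = 0 → v ⬝ᵥ y = 0) :
    (hankelMat A C x0 N T).rank ≤ Module.finrank ℝ V :=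
  hankel_rank_le_dim_invariant_general A C x0 N (T - N + 1) V hx0 hAV
end
end

section
/- Let y(k) = C A^k x0 be the nominal output from initial state x0 ∈ ℝ^n. Then the Hankel information satisfies Γ({y(k)}) ≤ min{ν p, μ}, where ν is the observability index, p is the number of outputs, and μ is the excitability index. -/
open Matrix

noncomputable section

/-! The Hankel matrix factors as `Y_{N,T} = O_N E_{T-N+1}(x₀)`, since `C A^{i+j} x₀` is
`C A^i` applied to `A^j x₀`. So its rank is at most that of either factor. The ranks of `O_N` and of
`E_N(x₀)` increase with `N` and become constant at `ν` and `μ(x₀)`, where these matrices have `ν p`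
rows and `μ(x₀)` columns. Finally `μ(x₀) ≤ μ` because, by Cayley–Hamilton, every `μ(x)` is at most
`n`, which makes the set of all `μ(x)` bounded. -/

/-- `f` is constant from `N` on. Both index definitions above are the least such `N` for a sequence
of ranks; the tail is indexed by `N + j`, as there. -/
def StabilizesAt {α : Type*} (f : ℕ → α) (N : ℕ) : Prop :=
  ∀ j, f (N + j) = f N

/-- The least index from which `f` is constant; it is `0` if there is no such index. -/
def stabilizationIndex {α : Type*} (f : ℕ → α) : ℕ :=
  sInf {N | StabilizesAt f N}

section Stabilization

variable {α : Type*} {f : ℕ → α} {N : ℕ}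

theorem StabilizesAt.stabilizationIndex_le (h : StabilizesAt f N) : stabilizationIndex f ≤ N :=
  Nat.sInf_le h

theorem StabilizesAt.stabilizesAt_stabilizationIndex (h : StabilizesAt f N) :
    StabilizesAt f (stabilizationIndex f) :=
  Nat.sInf_mem (s := {N | StabilizesAt f N}) ⟨N, h⟩

theorem StabilizesAt.apply_le_apply [Preorder α] (h : StabilizesAt f N) (hf : Monotone f) (m : ℕ) :
    f m ≤ f N :=
  (hf (Nat.le_add_left m N)).trans_eq (h m)

theorem stabilizesAt_of_forall_le [PartialOrder α] (hf : Monotone f) (h : ∀ m, f m ≤ f N) :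
    StabilizesAt f N :=
  fun j => (h (N + j)).antisymm (hf (Nat.le_add_right N j))

theorem exists_stabilizesAt_of_bddAbove {f : ℕ → ℕ} (hf : Monotone f)
    (hb : BddAbove (Set.range f)) : ∃ N, StabilizesAt f N := by
  obtain ⟨N, hN⟩ : sSup (Set.range f) ∈ Set.range f := Nat.sSup_mem (Set.range_nonempty f) hb
  exact ⟨N, stabilizesAt_of_forall_le hf fun m => (le_csSup hb ⟨m, rfl⟩).trans_eq hN.symm⟩

end Stabilization

section CayleyHamilton

variable {ι R : Type*} [Fintype ι] [DecidableEq ι] [CommRing R]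

theorem matrix_pow_mem_span_pow (A : Matrix ι ι R) (k : ℕ) :
    A ^ k ∈ Submodule.span R ((A ^ ·) '' Set.Iio (Fintype.card ι)) := by
  let _ : DecidableEq (Matrix ι ι R) := Classical.decEq _
  nontriviality R
  have span_eq_adjoin :=
    Submodule.span_range_natDegree_eq_adjoin A.charpoly_monic A.aeval_self_charpoly
  rw [A.charpoly_natDegree_eq_dim, Finset.coe_image, Finset.coe_range] at span_eq_adjoin
  rw [span_eq_adjoin]
  exact pow_mem (Algebra.self_mem_adjoin_singleton R A) k

theorem matrix_pow_mulVec_mem_span (A : Matrix ι ι R) (x : ι → R) (k : ℕ) :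
    (A ^ k) *ᵥ x ∈ Submodule.span R ((fun i => (A ^ i) *ᵥ x) '' Set.Iio (Fintype.card ι)) := by
  have h := Submodule.mem_map_of_mem (f := LinearMap.applyₗ x ∘ₗ (toLin' (R := R)).toLinearMap)
    (matrix_pow_mem_span_pow A k)
  rw [Submodule.map_span, Set.image_image] at h
  exact h

end CayleyHamilton

section Excitability

variable {n : ℕ} (A : Matrix (Fin n) (Fin n) ℝ) (x : Fin n → ℝ)

theorem monotone_rank_excMat : Monotone fun N => (excMat A x N).rank :=
  fun _ N h => rank_submatrix_le (excMat A x N) id (Fin.castLE h)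

theorem rank_excMat_le_rank_excMat_dim (m : ℕ) : (excMat A x m).rank ≤ (excMat A x n).rank := by
  rw [rank_eq_finrank_span_cols, rank_eq_finrank_span_cols]
  refine Submodule.finrank_mono (Submodule.span_le.2 ?_)
  rintro _ ⟨k, rfl⟩
  refine Submodule.span_mono ?_ (matrix_pow_mulVec_mem_span A x k)
  rintro _ ⟨i, hi, rfl⟩
  exact ⟨⟨i, hi.trans_eq (Fintype.card_fin n)⟩, rfl⟩

theorem stabilizesAt_rank_excMat : StabilizesAt (fun N => (excMat A x N).rank) n :=
  stabilizesAt_of_forall_le (monotone_rank_excMat A x) (rank_excMat_le_rank_excMat_dim A x)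

theorem excIndexAt_le_dim : excIndexAt A x ≤ n :=
  (stabilizesAt_rank_excMat A x).stabilizationIndex_le

theorem excIndexAt_le_excIndex : excIndexAt A x ≤ excIndex A :=
  le_csSup ⟨n, Set.forall_mem_range.2 (excIndexAt_le_dim A)⟩ ⟨x, rfl⟩

theorem rank_excMat_le_excIndexAt (m : ℕ) : (excMat A x m).rank ≤ excIndexAt A x :=
  calc (excMat A x m).rank
    _ ≤ (excMat A x (excIndexAt A x)).rank :=
        (stabilizesAt_rank_excMat A x).stabilizesAt_stabilizationIndex.apply_le_apply
          (monotone_rank_excMat A x) m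
    _ ≤ excIndexAt A x := rank_le_width _

end Excitability

section Observability

variable {n p : ℕ} (A : Matrix (Fin n) (Fin n) ℝ) (C : Matrix (Fin p) (Fin n) ℝ)

theorem monotone_rank_obsMat : Monotone fun N => (obsMat A C N).rank :=
  fun _ N h => rank_submatrix_le (obsMat A C N) (Prod.map (Fin.castLE h) id) id

theorem exists_stabilizesAt_rank_obsMat : ∃ N, StabilizesAt (fun N => (obsMat A C N).rank) N :=
  exists_stabilizesAt_of_bddAbove (monotone_rank_obsMat A C)
    ⟨Fintype.card (Fin n), Set.forall_mem_range.2 fun N => rank_le_card_width (obsMat A C N)⟩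

theorem rank_obsMat_le_obsIndex_mul (m : ℕ) : (obsMat A C m).rank ≤ obsIndex A C * p := by
  obtain ⟨N, hN⟩ := exists_stabilizesAt_rank_obsMat A C
  calc (obsMat A C m).rank
    _ ≤ (obsMat A C (obsIndex A C)).rank :=
        hN.stabilizesAt_stabilizationIndex.apply_le_apply (monotone_rank_obsMat A C) m
    _ ≤ Fintype.card (Fin (obsIndex A C) × Fin p) := rank_le_card_height _
    _ = obsIndex A C * p := by rw [Fintype.card_prod, Fintype.card_fin, Fintype.card_fin]

end Observability

section Hankel

variable {n p : ℕ} (A : Matrix (Fin n) (Fin n) ℝ) (C : Matrix (Fin p) (Fin n) ℝ) (x₀ : Fin n → ℝ)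

theorem hankelMat_eq_obsMat_mul_excMat (N T : ℕ) :
    hankelMat A C x₀ N T = obsMat A C N * excMat A x₀ (T - N + 1) := by
  ext ⟨i, r⟩ j
  have output_eq : (C * A ^ (j + i : ℕ)) *ᵥ x₀ = (C * A ^ (i : ℕ)) *ᵥ ((A ^ (j : ℕ)) *ᵥ x₀) := by
    rw [mulVec_mulVec, Matrix.mul_assoc, ← pow_add, add_comm]
  exact congrFun output_eq r

theorem rank_hankelMat_le_obsIndex_mul (N T : ℕ) :
    (hankelMat A C x₀ N T).rank ≤ obsIndex A C * p := by
  rw [hankelMat_eq_obsMat_mul_excMat]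
  exact (rank_mul_le_left _ _).trans (rank_obsMat_le_obsIndex_mul A C N)

theorem rank_hankelMat_le_excIndexAt (N T : ℕ) :
    (hankelMat A C x₀ N T).rank ≤ excIndexAt A x₀ := by
  rw [hankelMat_eq_obsMat_mul_excMat]
  exact (rank_mul_le_right _ _).trans (rank_excMat_le_excIndexAt A x₀ _)

end Hankel

/-- **Hankel information bound.** The Hankel information of the nominal output time series
satisfies `Γ({y(k)}) ≤ min {ν p, μ}`. -/
theorem hankelInfo_le {n p : ℕ}
    (A : Matrix (Fin n) (Fin n) ℝ) (C : Matrix (Fin p) (Fin n) ℝ) (x0 : Fin n → ℝ) :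
    hankelInfo A C x0 ≤ min (obsIndex A C * p) (excIndex A) := by
  refine csSup_le ⟨_, 0, 0, le_rfl, rfl⟩ ?_
  rintro _ ⟨N, T, -, rfl⟩
  exact le_min (rank_hankelMat_le_obsIndex_mul A C x0 N T)
    ((rank_hankelMat_le_excIndexAt A C x0 N T).trans (excIndexAt_le_excIndex A x0))
end
end

section
/- Let u : ℕ → ℝ^m be an attack input with u(k) = 0 for all k < T, where T ≥ ν + μ + 1, let x(0) = x0 ∈ ℝ^n, and let y^u denote the output of the system driven by u from x0 and y^0 = C A^k x0 the nominal output from the same initial state. Then y^u(k) = y^0(k) for all k ∈ ℕ (i.e., the attack is undetectable by the data-driven monitor) if and only if for every N ∈ ℕ the stacked vector u_{T:T+N−1} = (u(T), …, u(T+N−1)) lies in Ker(C_N). -/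
open Matrix

noncomputable section

/-- The block lower-triangular Toeplitz matrix `C_N` (the `(i,j)` block is `D` if `i = j`,
`C A^{i-j-1} B` if `i > j`, and `0` if `i < j`). -/
def ctrlMat {n p m : ℕ} (A : Matrix (Fin n) (Fin n) ℝ) (B : Matrix (Fin n) (Fin m) ℝ)
    (C : Matrix (Fin p) (Fin n) ℝ) (D : Matrix (Fin p) (Fin m) ℝ) (N : ℕ) :
    Matrix (Fin N × Fin p) (Fin N × Fin m) ℝ :=
  fun ir js =>
    if (ir.1 : ℕ) = (js.1 : ℕ) then D ir.2 js.2
    else if (js.1 : ℕ) < (ir.1 : ℕ) then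
      (C * A ^ ((ir.1 : ℕ) - (js.1 : ℕ) - 1) * B) ir.2 js.2
    else 0

/-- The state trajectory of `x(k+1) = A x(k) + B u(k)` from initial state `x0`. -/
def traj {n m : ℕ} (A : Matrix (Fin n) (Fin n) ℝ) (B : Matrix (Fin n) (Fin m) ℝ)
    (u : ℕ → Fin m → ℝ) (x0 : Fin n → ℝ) : ℕ → Fin n → ℝ
  | 0 => x0
  | k + 1 => A.mulVec (traj A B u x0 k) + B.mulVec (u k)

/-- The output `y(k) = C x(k) + D u(k)` of the system driven by input `u` from `x0`. -/
def output {n p m : ℕ} (A : Matrix (Fin n) (Fin n) ℝ) (B : Matrix (Fin n) (Fin m) ℝ)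
    (C : Matrix (Fin p) (Fin n) ℝ) (D : Matrix (Fin p) (Fin m) ℝ)
    (u : ℕ → Fin m → ℝ) (x0 : Fin n → ℝ) (k : ℕ) : Fin p → ℝ :=
  C.mulVec (traj A B u x0 k) + D.mulVec (u k)

/-!
Split the attacked trajectory at the onset time `T`. Up to `T` the state evolves freely, reaching
`A ^ T x0`; from then on, time invariance lets us restart the clock and superposition splits the
output into the nominal one plus the response from the zero state to the shifted input. This
zero-state response is the convolution of the input with the impulse response `D, CB, CAB, …`, and
the matrix of that convolution is `C_N`.
-/

section System

variable {n p m : ℕ} (A : Matrix (Fin n) (Fin n) ℝ) (B : Matrix (Fin n) (Fin m) ℝ)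
  (C : Matrix (Fin p) (Fin n) ℝ) (D : Matrix (Fin p) (Fin m) ℝ)
  (u : ℕ → Fin m → ℝ) (x0 : Fin n → ℝ)

theorem traj_add (s k : ℕ) :
    traj A B u x0 (s + k) = traj A B (fun j => u (s + j)) (traj A B u x0 s) k := by
  induction k with
  | zero => rfl
  | succ k ih => rw [← add_assoc, traj, traj, ih]

theorem traj_eq_pow_mulVec_add_sum (k : ℕ) :
    traj A B u x0 k =
      A ^ k *ᵥ x0 + ∑ j ∈ Finset.range k, (A ^ (k - 1 - j) * B) *ᵥ u j := by
  induction k with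
  | zero => simp [traj]
  | succ k ih =>
    have propagate_input : ∀ j ∈ Finset.range k,
        A *ᵥ ((A ^ (k - 1 - j) * B) *ᵥ u j) = (A ^ (k - j) * B) *ᵥ u j := by
      intro j hj
      have hexp : k - j = k - 1 - j + 1 := by grind
      rw [mulVec_mulVec, ← Matrix.mul_assoc, ← pow_succ', hexp]
    rw [traj, ih, mulVec_add, mulVec_mulVec, ← pow_succ', mulVec_sum,
      Finset.sum_congr rfl propagate_input, add_assoc, Finset.sum_range_succ]
    simp

variable {u} in
theorem traj_eq_pow_mulVec_of_input_eq_zero {k : ℕ} (hu : ∀ j < k, u j = 0) :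
    traj A B u x0 k = A ^ k *ᵥ x0 := by
  rw [traj_eq_pow_mulVec_add_sum, add_eq_left]
  exact Finset.sum_eq_zero fun j hj => by rw [hu j (Finset.mem_range.1 hj), mulVec_zero]

theorem output_add (s k : ℕ) :
    output A B C D u x0 (s + k) =
      output A B C D (fun j => u (s + j)) (traj A B u x0 s) k := by
  rw [output, output, traj_add]

theorem output_eq_nominal_add_zero_state (k : ℕ) :
    output A B C D u x0 k = C *ᵥ (A ^ k *ᵥ x0) + output A B C D u 0 k := by
  simp only [output, traj_eq_pow_mulVec_add_sum, mulVec_zero, zero_add, mulVec_add, add_assoc]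

variable {u} in
theorem output_eq_nominal_of_input_eq_zero {k : ℕ} (hu : ∀ j ≤ k, u j = 0) :
    output A B C D u x0 k = C *ᵥ (A ^ k *ᵥ x0) := by
  rw [output, traj_eq_pow_mulVec_of_input_eq_zero A B x0 fun j hj => hu j hj.le, hu k le_rfl,
    mulVec_zero, add_zero]

variable {u} in
theorem output_add_eq_nominal_add_zero_state {T : ℕ} (hu : ∀ j < T, u j = 0) (k : ℕ) :
    output A B C D u x0 (T + k) =
      C *ᵥ (A ^ (T + k) *ᵥ x0) + output A B C D (fun j => u (T + j)) 0 k := by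
  rw [output_add, output_eq_nominal_add_zero_state, traj_eq_pow_mulVec_of_input_eq_zero A B x0 hu,
    mulVec_mulVec x0, ← pow_add, add_comm k T]

/-- The impulse response (sequence of Markov parameters) `D, CB, CAB, CA²B, …` of the system: the
kernel whose convolution with the input is the output from the zero initial state. -/
def impulseResponse : ℕ → Matrix (Fin p) (Fin m) ℝ
  | 0 => D
  | k + 1 => C * A ^ k * B

theorem output_zero_state_eq_convolution (k : ℕ) :
    output A B C D u 0 k =
      ∑ j ∈ Finset.range (k + 1), impulseResponse A B C D (k - j) *ᵥ u j := by
  have past_input : ∀ j ∈ Finset.range k,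
      C *ᵥ ((A ^ (k - 1 - j) * B) *ᵥ u j) = impulseResponse A B C D (k - j) *ᵥ u j := by
    intro j hj
    have hexp : k - j = k - 1 - j + 1 := by grind
    rw [mulVec_mulVec, ← Matrix.mul_assoc, hexp, impulseResponse]
  rw [output, traj_eq_pow_mulVec_add_sum, mulVec_zero, zero_add, mulVec_sum,
    Finset.sum_congr rfl past_input, Finset.sum_range_succ, Nat.sub_self, impulseResponse]

theorem ctrlMat_apply {N : ℕ} (i j : Fin N) (r : Fin p) (s : Fin m) :
    ctrlMat A B C D N (i, r) (j, s) =
      if (j : ℕ) ≤ i then impulseResponse A B C D (i - j) r s else 0 := by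
  rcases lt_trichotomy (j : ℕ) i with hji | hji | hij
  · obtain ⟨d, hd⟩ := Nat.exists_eq_add_of_lt hji
    have hsub : (i : ℕ) - j = d + 1 := by omega
    simp [ctrlMat, hji, hji.ne', hji.le, hsub, impulseResponse]
  · simp [ctrlMat, hji, impulseResponse]
  · simp [ctrlMat, hij.ne, hij.not_gt, hij.not_ge]

theorem ctrlMat_mulVec_apply {N : ℕ} (i : Fin N) (r : Fin p) :
    (ctrlMat A B C D N *ᵥ fun js : Fin N × Fin m => u js.1 js.2) (i, r) =
      output A B C D u 0 i r := by
  let g (j : ℕ) : ℝ := if j ≤ i then (impulseResponse A B C D (i - j) *ᵥ u j) r else 0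
  have causal : (Finset.range N).filter (· ≤ (i : ℕ)) = Finset.range (i + 1) := by grind
  calc (ctrlMat A B C D N *ᵥ fun js : Fin N × Fin m => u js.1 js.2) (i, r)
    _ = ∑ j : Fin N, g j := by
      simp [g, mulVec, dotProduct, Fintype.sum_prod_type, ctrlMat_apply, Finset.sum_ite_irrel]
    _ = ∑ j ∈ Finset.range N, g j := Fin.sum_univ_eq_sum_range g N
    _ = ∑ j ∈ Finset.range (i + 1), (impulseResponse A B C D (i - j) *ᵥ u j) r := by
      rw [← Finset.sum_filter, causal]
    _ = output A B C D u 0 i r := by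
      rw [output_zero_state_eq_convolution, Finset.sum_apply]

theorem forall_ctrlMat_mulVec_eq_zero_iff :
    (∀ N : ℕ, (ctrlMat A B C D N *ᵥ fun js : Fin N × Fin m => u js.1 js.2) = 0) ↔
      ∀ k : ℕ, output A B C D u 0 k = 0 := by
  constructor
  · intro hker k
    ext r
    exact (ctrlMat_mulVec_apply A B C D u (Fin.last k) r).symm.trans
      (congrFun (hker (k + 1)) (Fin.last k, r))
  · intro hzero N
    ext ⟨i, r⟩
    rw [ctrlMat_mulVec_apply, hzero i]
    rfl

variable {u} in
theorem data_driven_undetectable_attacks_general {T : ℕ} (hu : ∀ k < T, u k = 0) :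
    (∀ k : ℕ, output A B C D u x0 k = C *ᵥ (A ^ k *ᵥ x0)) ↔
      ∀ N : ℕ, (ctrlMat A B C D N *ᵥ fun js : Fin N × Fin m => u (T + js.1) js.2) = 0 := by
  rw [forall_ctrlMat_mulVec_eq_zero_iff A B C D fun j => u (T + j)]
  constructor
  · intro hout k
    exact add_eq_left.1 <|
      (output_add_eq_nominal_add_zero_state A B C D x0 hu k).symm.trans (hout (T + k))
  · intro hzero k
    rcases lt_or_ge k T with hk | hk
    · exact output_eq_nominal_of_input_eq_zero A B C D x0 fun j hj => hu j (hj.trans_lt hk)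
    · obtain ⟨i, rfl⟩ := Nat.exists_eq_add_of_le hk
      rw [output_add_eq_nominal_add_zero_state A B C D x0 hu, hzero, add_zero]

end System

/-- **Data-driven undetectable attacks.** An attack input `u` with `u(k) = 0` for `k < T`,
where `T ≥ ν + μ + 1`, is undetectable (the attacked output coincides with the nominal
output for all times) if and only if `u_{T:T+N-1} ∈ Ker C_N` for every `N ∈ ℕ`. -/
theorem data_driven_undetectable_attacks {n p m : ℕ}
    (A : Matrix (Fin n) (Fin n) ℝ) (B : Matrix (Fin n) (Fin m) ℝ)
    (C : Matrix (Fin p) (Fin n) ℝ) (D : Matrix (Fin p) (Fin m) ℝ)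
    (u : ℕ → Fin m → ℝ) (x0 : Fin n → ℝ)
    (T : ℕ) (hT : obsIndex A C + excIndex A + 1 ≤ T)
    (hu : ∀ k : ℕ, k < T → u k = 0) :
    (∀ k : ℕ, output A B C D u x0 k = C.mulVec ((A ^ k).mulVec x0)) ↔
    (∀ N : ℕ,
      (ctrlMat A B C D N).mulVec (fun js : Fin N × Fin m => u (T + (js.1 : ℕ)) js.2) = 0) :=
  data_driven_undetectable_attacks_general A B C D x0 hu
end
end
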